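/- Unbiased-strategy factorization for Call-by-Value: for all λ-terms M and N, if M →βv* N then there exists a term U with M ⊳* U and U ⋫* N (where * denotes reflexive-transitive closure). -/

import Mathlib

/-- Untyped λ-terms in de Bruijn representation. -/
inductive Tm : Type
  | var : ℕ → Tm
  | lam : Tm → Tm
  | app : Tm → Tm → Tm
deriving DecidableEq

namespace Tm

/-- Lift (shift by one) the free variables of index `≥ d`. -/
def lift (d : ℕ) : Tm → Tm
  | var n => if n < d then var n else var (n + 1)
  | lam M => lam (lift (d + 1) M)
  | app M N => app (lift d M) (lift d N)

/-- Capture-avoiding substitution `M[N/k]` of `N` for the free variable `k` in `M`. -/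
def subst : Tm → ℕ → Tm → Tm
  | var n, k, N => if n = k then N else if k < n then var (n - 1) else var n
  | lam M, k, N => lam (subst M (k + 1) (lift 0 N))
  | app M₁ M₂, k, N => app (subst M₁ k N) (subst M₂ k N)

end Tm

/-- Values: variables and abstractions. -/
inductive IsValue : Tm → Prop
  | var (n : ℕ) : IsValue (Tm.var n)
  | lam (M : Tm) : IsValue (Tm.lam M)

/-- βv-reduction: the closure of the root rule `(λx.M)V ↦βv M[V/x]` (for `V` a value)
under arbitrary contexts. -/
inductive Betav : Tm → Tm → Prop
  | beta {M V} : IsValue V → Betav (Tm.app (Tm.lam M) V) (M.subst 0 V)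
  | lam {M M'} : Betav M M' → Betav (Tm.lam M) (Tm.lam M')
  | appL {M M' N} : Betav M M' → Betav (Tm.app M N) (Tm.app M' N)
  | appR {M N N'} : Betav N N' → Betav (Tm.app M N) (Tm.app M N')

/-- Weak reduction: the closure of `↦βv` under weak contexts `W ::= ⟨⟩ | W M | M W`. -/
inductive Weakv : Tm → Tm → Prop
  | beta {M V} : IsValue V → Weakv (Tm.app (Tm.lam M) V) (M.subst 0 V)
  | appL {M M' N} : Weakv M M' → Weakv (Tm.app M N) (Tm.app M' N)
  | appR {M N N'} : Weakv N N' → Weakv (Tm.app M N) (Tm.app M N')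

/-- The unbiased strategy `⊳`: perform weak steps as long as possible; once the term has
no weak redex, iterate in the subterms (in arbitrary order). -/
inductive UnbV : Tm → Tm → Prop
  | weak {M M'} : Weakv M M' → UnbV M M'
  | lam {P P'} : (∀ s, ¬ Weakv (Tm.lam P) s) → UnbV P P' → UnbV (Tm.lam P) (Tm.lam P')
  | appL {P P' Q} : (∀ s, ¬ Weakv (Tm.app P Q) s) → UnbV P P' →
      UnbV (Tm.app P Q) (Tm.app P' Q)
  | appR {P Q Q'} : (∀ s, ¬ Weakv (Tm.app P Q) s) → UnbV Q Q' →
      UnbV (Tm.app P Q) (Tm.app P Q')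

open Relation

namespace Tm

theorem lift_lift (M : Tm) : ∀ i d, i ≤ d → lift (d + 1) (lift i M) = lift i (lift d M) := by
  induction M with
  | var n => intro i d h; simp only [lift]; split_ifs <;> simp only [lift] <;> split_ifs <;> first | rfl | omega
  | lam M ih => intro i d h; simp only [lift]; rw [ih _ _ (by omega)]
  | app M N ih1 ih2 => intro i d h; simp only [lift]; rw [ih1 _ _ h, ih2 _ _ h]

theorem subst_lift_self (M : Tm) : ∀ k V, subst (lift k M) k V = M := by
  induction M with
  | var n =>
    intro k V; simp only [lift]; split_ifs <;> simp only [subst] <;> split_ifs <;>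
      first | rfl | omega
  | lam M ih => intro k V; simp only [lift, subst, ih]
  | app M N ih1 ih2 => intro k V; simp only [lift, subst, ih1, ih2]

/-- Lifting above the substituted index. -/
theorem lift_subst (M : Tm) : ∀ k d V, k ≤ d →
    lift d (subst M k V) = subst (lift (d + 1) M) k (lift d V) := by
  induction M with
  | var n =>
    intro k d V h; simp only [subst, lift]; split_ifs <;> simp only [subst, lift] <;>
      split_ifs <;> first | rfl | omega | (congr 1; omega)
  | lam M ih =>
    intro k d V h; simp only [subst, lift]
    rw [ih _ _ _ (by omega), lift_lift _ _ _ (by omega)]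
  | app M N ih1 ih2 => intro k d V h; simp only [lift, subst, ih1 _ _ _ h, ih2 _ _ _ h]

/-- Lifting below the substituted index. -/
theorem subst_lift (M : Tm) : ∀ i k V, i ≤ k →
    subst (lift i M) (k + 1) (lift i V) = lift i (subst M k V) := by
  induction M with
  | var n =>
    intro i k V h; simp only [subst, lift]; split_ifs <;> simp only [subst, lift] <;>
      split_ifs <;> first | rfl | omega | (congr 1; omega)
  | lam M ih =>
    intro i k V h; simp only [subst, lift]
    rw [← lift_lift _ _ _ (Nat.zero_le i), ih _ _ _ (by omega)]
  | app M N ih1 ih2 => intro i k V h; simp only [lift, subst, ih1 _ _ _ h, ih2 _ _ _ h]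

theorem subst_subst (M : Tm) : ∀ i k V W, i ≤ k →
    subst (subst M i V) k W = subst (subst M (k + 1) (lift i W)) i (subst V k W) := by
  induction M with
  | var n =>
    intro i k V W h
    rcases lt_trichotomy n i with h1 | h1 | h1
    · simp [subst, show n ≠ i by omega, show ¬ i < n by omega, show n ≠ k by omega,
        show ¬ k < n by omega, show n ≠ k + 1 by omega, show ¬ k + 1 < n by omega]
    · subst h1
      simp [subst, show n ≠ k + 1 by omega, show ¬ k + 1 < n by omega]
    · rcases lt_trichotomy n (k + 1) with h2 | h2 | h2
      · simp [subst, show n ≠ i by omega, h1, show n - 1 ≠ k by omega,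
          show ¬ k < n - 1 by omega, show n ≠ k + 1 by omega, show ¬ k + 1 < n by omega]
      · subst h2
        simp [subst, show k + 1 ≠ i by omega, h1, subst_lift_self]
      · simp [subst, show n ≠ i by omega, h1, show n - 1 ≠ k by omega,
          show k < n - 1 by omega, show n ≠ k + 1 by omega, show k + 1 < n by omega,
          show n - 1 ≠ i by omega, show i < n - 1 by omega]
  | lam M ih =>
    intro i k V W h; simp only [subst]
    rw [ih _ _ _ _ (by omega), lift_lift _ _ _ (Nat.zero_le i),
      subst_lift _ _ _ _ (Nat.zero_le k)]
  | app M N ih1 ih2 => intro i k V W h; simp only [subst, ih1 _ _ _ _ h, ih2 _ _ _ _ h]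

/-- `x_i` occurs free. -/
def free : ℕ → Tm → Prop
  | i, var n => n = i
  | i, lam M => free (i + 1) M
  | i, app M N => free i M ∨ free i N

theorem not_free_lift (M : Tm) : ∀ d, ¬ free d (lift d M) := by
  induction M with
  | var n => intro d; simp only [lift]; split_ifs <;> simp only [free] <;> omega
  | lam M ih => intro d; exact ih (d + 1)
  | app M N ih1 ih2 => intro d; simp only [lift, free]; simp [ih1 d, ih2 d]

theorem free_lift (M : Tm) : ∀ d i, d ≤ i → free (i + 1) (lift d M) → free i M := by
  induction M with
  | var n => intro d i h; simp only [lift]; split_ifs <;> simp only [free] <;> omega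
  | lam M ih => intro d i h h'; exact ih (d + 1) (i + 1) (by omega) h'
  | app M N ih1 ih2 => intro d i h; exact Or.imp (ih1 d i h) (ih2 d i h)

end Tm

open Tm

theorem IsValue.lift {V : Tm} (h : IsValue V) (d : ℕ) : IsValue (V.lift d) := by
  cases h with
  | var n => simp only [Tm.lift]; split_ifs <;> constructor
  | lam M => constructor

theorem IsValue.subst {V W : Tm} (h : IsValue V) (k : ℕ) (hW : IsValue W) :
    IsValue (V.subst k W) := by
  cases h with
  | var n => simp only [Tm.subst]; split_ifs <;> first | exact hW | constructor
  | lam M => constructor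

theorem IsValue.not_app {M N : Tm} (h : IsValue (app M N)) : False := by cases h

theorem IsValue.not_weak {V s : Tm} (h : IsValue V) : ¬ Weakv V s := by
  cases h <;> intro h <;> cases h

theorem Weakv.betav {M N : Tm} (h : Weakv M N) : Betav M N := by
  induction h with
  | beta h => exact .beta h
  | appL _ ih => exact .appL ih
  | appR _ ih => exact .appR ih

theorem UnbV.betav {M N : Tm} (h : UnbV M N) : Betav M N := by
  induction h with
  | weak h => exact h.betav
  | lam _ _ ih => exact .lam ih
  | appL _ _ ih => exact .appL ih
  | appR _ _ ih => exact .appR ih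

theorem Weakv.lift {M N : Tm} (h : Weakv M N) (d : ℕ) : Weakv (M.lift d) (N.lift d) := by
  induction h with
  | beta h => rw [lift_subst _ _ _ _ (Nat.zero_le d)]; exact .beta (h.lift d)
  | appL _ ih => exact .appL ih
  | appR _ ih => exact .appR ih

theorem Weakv.subst {M N V : Tm} (h : Weakv M N) (k : ℕ) (hV : IsValue V) :
    Weakv (M.subst k V) (N.subst k V) := by
  induction h with
  | beta h => rw [subst_subst _ _ _ _ _ (Nat.zero_le k)]; exact .beta (h.subst k hV)
  | appL _ ih => exact .appL ih
  | appR _ ih => exact .appR ih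

/-- Counted standard reductions; the flag `true` marks those without weak steps at top level. -/
inductive Std : Bool → ℕ → Tm → Tm → Prop
  | var (i : ℕ) : Std true 0 (.var i) (.var i)
  | lam {b n P Q} : Std b n P Q → Std true n (.lam P) (.lam Q)
  | app {n m P P' R R'} : Std true n P P' → Std true m R R' →
      Std true (n + m) (.app P R) (.app P' R')
  | weak {b n P P₁ Q} : Weakv P P₁ → Std b n P₁ Q → Std false (n + 1) P Q

/-- Some standard reduction. -/
def St (M N : Tm) : Prop := ∃ b n, Std b n M N

theorem std_refl (M : Tm) : Std true 0 M M := by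
  induction M with
  | var n => exact .var n
  | lam M ih => exact .lam ih
  | app M N ih1 ih2 => exact .app ih1 ih2

theorem St.weak {M M' N : Tm} (h : Weakv M M') (h' : St M' N) : St M N := by
  obtain ⟨b, n, h'⟩ := h'
  exact ⟨_, _, .weak h h'⟩

theorem Std.true_of_false_aux {b n M N} (h : Std b n M N) (P : Tm → Tm → Prop)
    (h0 : ∀ M N n, Std true n M N → P M N)
    (h1 : ∀ M M' N, Weakv M M' → P M' N → P M N) : P M N := by
  induction h with
  | var i => exact h0 _ _ _ (.var i)
  | lam h => exact h0 _ _ _ (.lam h)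
  | app h h' => exact h0 _ _ _ (.app h h')
  | weak w _ ih => exact h1 _ _ _ w ih

theorem St.app {P P' R R' : Tm} (h : St P P') (h' : St R R') :
    St (.app P R) (.app P' R') := by
  obtain ⟨b, n, h⟩ := h
  obtain ⟨b', n', h'⟩ := h'
  refine h.true_of_false_aux (fun P P' => St (.app P R) (.app P' R')) ?_ ?_
  · intro P P' n h
    refine h'.true_of_false_aux (fun R R' => St (.app P R) (.app P' R')) ?_ ?_
    · intro R R' m h'
      exact ⟨_, _, .app h h'⟩
    · intro R R₁ R' w h
      exact .weak (.appR w) h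
  · intro R R₁ R' w h
    exact .weak (.appL w) h

theorem St.lam {P P' : Tm} (h : St P P') : St (.lam P) (.lam P') := by
  obtain ⟨b, n, h⟩ := h
  exact ⟨_, _, .lam h⟩

theorem Std.lift {b n M N} (h : Std b n M N) : ∀ d, Std b n (M.lift d) (N.lift d) := by
  induction h with
  | var i => intro d; exact std_refl _
  | lam h ih => intro d; exact .lam (ih _)
  | app h h' ih ih' => intro d; exact .app (ih _) (ih' _)
  | weak w _ ih => intro d; exact .weak (w.lift d) (ih _)

theorem Std.subst {b n M N} (h : Std b n M N) : ∀ k V V', IsValue V → St V V' →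
    St (M.subst k V) (N.subst k V') := by
  induction h with
  | var i =>
    intro k V V' hV hs; simp only [Tm.subst]; split_ifs
    · exact hs
    · exact ⟨_, _, std_refl _⟩
    · exact ⟨_, _, std_refl _⟩
  | lam h ih =>
    intro k V V' hV hs
    obtain ⟨b, n, hs⟩ := hs
    exact .lam (ih _ _ _ (hV.lift 0) ⟨_, _, hs.lift 0⟩)
  | app h h' ih ih' => intro k V V' hV hs; exact .app (ih _ _ _ hV hs) (ih' _ _ _ hV hs)
  | weak w _ ih => intro k V V' hV hs; exact .weak (w.subst k hV) (ih _ _ _ hV hs)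

theorem Std.value {n M N} (h : Std true n M N) (hN : IsValue N) : IsValue M := by
  cases h with
  | var i => constructor
  | lam h => constructor
  | app h h' => cases hN

theorem Std.step {b n M N} (h : Std b n M N) : ∀ N', Betav N N' → St M N' := by
  induction h with
  | var i => intro N' h; cases h
  | lam h ih =>
    intro N' h
    cases h with
    | lam h => exact .lam (ih _ h)
  | @app n m P P' R R' h h' ih ih' =>
    intro N' hs
    cases hs with
    | appL hs => exact .app (ih _ hs) ⟨_, _, h'⟩
    | appR hs => exact .app ⟨_, _, h⟩ (ih' _ hs)
    | beta hV =>
      cases h with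
      | lam h => exact .weak (.beta (h'.value hV)) (h.subst _ _ _ (h'.value hV) ⟨_, _, h'⟩)
  | weak w _ ih => intro N' h; exact .weak w (ih _ h)

theorem St.of_betav {M N : Tm} (h : ReflTransGen Betav M N) : St M N := by
  induction h with
  | refl => exact ⟨_, _, std_refl _⟩
  | tail _ h ih =>
    obtain ⟨b, n, ih⟩ := ih
    exact ih.step _ h

/-- Counted weak reduction. -/
inductive WS : ℕ → Tm → Tm → Prop
  | refl (M : Tm) : WS 0 M M
  | head {c M M' N} : Weakv M M' → WS c M' N → WS (c + 1) M N

theorem WS.rtg {c M N} (h : WS c M N) : ReflTransGen Weakv M N := by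
  induction h with
  | refl => exact .refl
  | head w _ ih => exact .head w ih

theorem WS.std {c M N} (h : WS c M N) : ∀ {b m Q}, Std b m N Q → ∃ b', Std b' (c + m) M Q := by
  induction h with
  | refl => intro b m Q h; exact ⟨b, by simpa using h⟩
  | @head c M M' N w _ ih =>
    intro b m Q h
    obtain ⟨b', h⟩ := ih h
    exact ⟨_, by simpa [Nat.add_right_comm] using Std.weak w h⟩

/-- A serialization of a standard reduction from `P` to `Q` goes through a given step. -/
inductive Thru : Bool → ℕ → Tm → Tm → Tm → Tm → Prop
  | now {b n P Z' Q} : Weakv P Z' → Std b n Z' Q → Thru false (n + 1) P P Z' Q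
  | later {b n P P₁ Z Z' Q} : Weakv P P₁ → Thru b n P₁ Z Z' Q → Thru false (n + 1) P Z Z' Q
  | lam {b n P Z Z' Q} : Thru b n P Z Z' Q →
      Thru true n (.lam P) (.lam Z) (.lam Z') (.lam Q)
  | appL {n m P Z Z' Q R R'} : Thru true n P Z Z' Q → Std true m R R' →
      Thru true (n + m) (.app P R) (.app Z R) (.app Z' R) (.app Q R')
  | appR {n m P P' Z Z' R R'} : Std true n P P' → Thru true m R Z Z' R' →
      Thru true (n + m) (.app P R) (.app P' Z) (.app P' Z') (.app P' R')

theorem Thru.betav {b n P Z Z' Q} (h : Thru b n P Z Z' Q) : Betav Z Z' := by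
  induction h with
  | now w _ => exact w.betav
  | later _ _ ih => exact ih
  | lam _ ih => exact .lam ih
  | appL _ _ ih => exact .appL ih
  | appR _ _ ih => exact .appR ih

theorem Std.serial {b n P Q} (h : Std b n P Q) :
    ReflTransGen (fun Z Z' => Thru b n P Z Z' Q) P Q := by
  induction h with
  | var i => exact .refl
  | lam _ ih => exact ih.lift Tm.lam (fun _ _ h => .lam h)
  | @app n m P P' R R' h h' ih ih' =>
    exact (ih.lift (fun X => Tm.app X R) (fun _ _ t => .appL t h')).trans
      (ih'.lift (fun X => Tm.app P' X) (fun _ _ t => .appR h t))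
  | weak w h ih => exact .head (.now w h) (ih.lift id (fun _ _ t => .later w t))

/-- No self-reproduction below a lifted value. -/
theorem no_repro (X : Tm) : ∀ k V Y, IsValue V → (1 ≤ k → ¬ free (k - 1) V) →
    X.subst k V = lam (app X Y) → k = 0 ∧ X = var 0 := by
  have key : ∀ s (X : Tm), sizeOf X ≤ s → ∀ k V Y, IsValue V →
      (1 ≤ k → ¬ free (k - 1) V) → X.subst k V = lam (app X Y) → k = 0 ∧ X = var 0 := by
    intro s
    induction s with
    | zero => intro X hX; cases X <;> simp at hX
    | succ s ih =>
      intro X hX k V Y hV hf he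
      cases X with
      | var n =>
        simp only [Tm.subst] at he
        split_ifs at he with h1
        subst h1
        rcases Nat.eq_zero_or_pos n with h | h
        · subst h; simp
        · exfalso
          apply hf h
          rw [he]
          simp only [free]
          left; omega
      | app A B => simp [Tm.subst] at he
      | lam R =>
        exfalso
        simp only [Tm.subst, Tm.lam.injEq] at he
        cases R with
        | var n =>
          simp only [Tm.subst] at he
          split_ifs at he
          exact (he ▸ hV.lift 0).not_app
        | lam R => simp [Tm.subst] at he
        | app R1 R2 =>
          simp only [Tm.subst, Tm.app.injEq] at he
          have := ih R1 (by simp at hX; omega) (k + 1) _ R2 (hV.lift 0) (by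
            intro _ hfr
            simp only [Nat.add_sub_cancel] at hfr
            rcases Nat.eq_zero_or_pos k with h | h
            · subst h; exact not_free_lift _ _ hfr
            · obtain ⟨j, rfl⟩ : ∃ j, k = j + 1 := ⟨k - 1, by omega⟩
              exact hf h (free_lift _ _ _ (Nat.zero_le _) hfr)) he.1
          omega
  exact key _ X le_rfl

theorem no_regress : ∀ s (C : Tm), sizeOf C ≤ s → ∀ C' j B, Betav C C' →
    C.subst j (lam B) = lam (app (var 0) C') → False := by
  intro s
  induction s with
  | zero => intro C hC; cases C <;> simp at hC
  | succ s ih =>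
    intro C hC C' j B hb he
    cases hb with
    | beta => simp [Tm.subst] at he
    | appL => simp [Tm.subst] at he
    | appR => simp [Tm.subst] at he
    | @lam D D' hb =>
      simp only [Tm.subst, Tm.lam.injEq, Tm.lift] at he
      cases D with
      | var n => cases hb
      | lam => simp [Tm.subst] at he
      | app D1 E =>
        simp only [Tm.subst, Tm.app.injEq] at he
        obtain ⟨he1, he2⟩ := he
        have hD1 : D1 = var 0 := by
          cases D1 with
          | var n =>
            simp only [Tm.subst] at he1
            split_ifs at he1
            · simp only [Tm.var.injEq] at he1; omega
            · exact he1
          | lam => simp [Tm.subst] at he1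
          | app => simp [Tm.subst] at he1
        subst hD1
        cases hb with
        | appL hb => cases hb
        | appR hb => exact ih E (by simp at hC; omega) _ _ _ hb he2

/-- A value substituted at level `k`, lifted `k` times (only the last lifting matters). -/
def Lifted (k : ℕ) (V : Tm) : Prop := 1 ≤ k → ¬ free (k - 1) V

theorem Lifted.succ {k V} (hf : Lifted k V) : Lifted (k + 1) (V.lift 0) := by
  intro _ hfr
  simp only [Nat.add_sub_cancel] at hfr
  rcases Nat.eq_zero_or_pos k with h | h
  · subst h; exact not_free_lift _ _ hfr
  · obtain ⟨j, rfl⟩ : ∃ j, k = j + 1 := ⟨k - 1, by omega⟩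
    exact hf h (free_lift _ _ _ (Nat.zero_le _) hfr)

def Coin (n : ℕ) (P Z Z' Q : Tm) : Prop := ∀ k V W, IsValue V →
    Lifted k V → (k = 0 → W = V) → Z.subst k V = app (lam Z') W →
    ∃ b c m P'', c + m < n ∧ WS c (P.subst k V) (app (lam P'') W) ∧ Std b m P'' Q

theorem thru_coincide {b n P Z Z' Q} (h : Thru b n P Z Z' Q) : Coin n P Z Z' Q ∧
    (b = true → ∀ Z₁, Z = lam Z₁ → ∃ P₁ Z₁' Q₁, P = lam P₁ ∧ Z' = lam Z₁' ∧ Q = lam Q₁ ∧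
      Coin n P₁ Z₁ Z₁' Q₁) := by
  induction h with
  | @now b n P Z' Q w hs =>
    refine ⟨?_, by simp⟩
    intro k V W hV hf hW he
    exact ⟨b, 0, n, Z', by omega, he ▸ .refl _, hs⟩
  | later w _ ih =>
    refine ⟨?_, by simp⟩
    intro k V W hV hf hW he
    obtain ⟨b, c, m, P'', h1, h2, h3⟩ := ih.1 k V W hV hf hW he
    exact ⟨b, c + 1, m, P'', by omega, .head (w.subst k hV) h2, h3⟩
  | lam _ ih =>
    constructor
    · intro k V W hV hf hW he; simp [Tm.subst] at he
    · intro _ Z₁ hZ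
      cases hZ
      exact ⟨_, _, _, rfl, rfl, rfl, ih.1⟩
  | @appL n m P Z Z' Q R R' ht hs' ih =>
    refine ⟨?_, by simp⟩
    intro k V W hV hf hW he
    simp only [Tm.subst, Tm.app.injEq] at he
    obtain ⟨he1, he2⟩ := he
    have hb := ht.betav
    cases Z with
    | var => cases hb
    | app => simp [Tm.subst] at he1
    | lam Z₁ =>
      obtain ⟨P₁, Z₁', Q₁, rfl, rfl, rfl, hc⟩ := ih.2 rfl Z₁ rfl
      simp only [Tm.subst, Tm.lam.injEq] at he1
      obtain ⟨b, c, m', P'', h1, h2, h3⟩ := hc (k + 1) _ R (hV.lift 0) hf.succ (by omega) he1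
      obtain ⟨b', h4⟩ := h2.std (Std.app (Std.lam h3) hs')
      refine ⟨b', 0, _, P₁.subst (k + 1) (V.lift 0), ?_, ?_, h4⟩
      · omega
      · simp only [Tm.subst, he2]
        exact .refl _
  | @appR n m P P' Z Z' R R' hs ht ih =>
    refine ⟨?_, by simp⟩
    intro k V W hV hf hW he
    exfalso
    simp only [Tm.subst, Tm.app.injEq] at he
    obtain ⟨he1, he2⟩ := he
    obtain ⟨rfl, rfl⟩ := no_repro _ _ _ _ hV hf he1
    simp only [Tm.subst, if_true] at he1
    rw [hW rfl] at he2
    subst he1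
    exact no_regress _ _ le_rfl _ _ _ ht.betav he2

/-- Steps that are not weak steps. -/
def NW (a b : Tm) : Prop := Betav a b ∧ ¬ Weakv a b

theorem weak_redex_inv {P V N : Tm} (hV : IsValue V) (h : Weakv (app (lam P) V) N) :
    N = P.subst 0 V := by
  cases h with
  | beta => rfl
  | appL h => cases h
  | appR h => exact (hV.not_weak h).elim

theorem NW.arg {Q V V' : Tm} (hV : IsValue V) (h : Betav V V') :
    NW (app (lam Q) V) (app (lam Q) V') := by
  refine ⟨.appR h, fun w => ?_⟩
  have he := weak_redex_inv hV w
  cases Q with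
  | var n =>
    simp only [Tm.subst] at he
    split_ifs at he
    exact (he.symm ▸ hV : IsValue (app _ _)).not_app
  | lam => simp [Tm.subst] at he
  | app Q1 Q2 =>
    simp only [Tm.subst, Tm.app.injEq] at he
    obtain ⟨he1, he2⟩ := he
    obtain ⟨-, rfl⟩ := no_repro _ _ _ _ hV (by omega) he1.symm
    simp only [Tm.subst, if_true] at he1
    subst he1
    cases h with
    | lam h =>
      cases h with
      | appL h => cases h
      | appR h => exact no_regress _ _ le_rfl _ _ _ h he2.symm

theorem redex_fact (n : ℕ) : ∀ b P Q V, IsValue V → Std b n P Q →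
    ∃ U, ReflTransGen Weakv (app (lam P) V) U ∧ ReflTransGen NW U (app (lam Q) V) := by
  induction n using Nat.strong_induction_on with
  | _ n ih =>
    intro b P Q V hV hs
    by_cases hc : ∃ Z Z', Thru b n P Z Z' Q ∧ Z.subst 0 V = app (lam Z') V
    · obtain ⟨Z, Z', ht, he⟩ := hc
      obtain ⟨b', c, m, P'', h1, h2, h3⟩ :=
        (thru_coincide ht).1 0 V V hV (fun h => by omega) (fun _ => rfl) he
      obtain ⟨U, h4, h5⟩ := ih m (by omega) b' P'' Q V hV h3
      exact ⟨U, .head (.beta hV) (h2.rtg.trans h4), h5⟩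
    · refine ⟨_, .refl, hs.serial.lift (fun X => app (lam X) V) ?_⟩
      intro Z Z' ht
      exact ⟨.appL (.lam ht.betav), fun w => hc ⟨Z, Z', ht, (weak_redex_inv hV w).symm⟩⟩

theorem NW.value {a b : Tm} (h : NW a b) (hb : IsValue b) : IsValue a := by
  obtain ⟨h, hw⟩ := h
  cases h with
  | beta hV => exact (hw (.beta hV)).elim
  | lam => constructor
  | appL => cases hb
  | appR => cases hb

theorem NW.isLam {a b : Tm} (h : NW a (lam b)) : ∃ a', a = lam a' := by
  obtain ⟨h, hw⟩ := h
  generalize hc : lam b = c at *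
  cases h with
  | beta hV => exact (hw (.beta hV)).elim
  | lam => exact ⟨_, rfl⟩
  | appL => cases hc
  | appR => cases hc

theorem NW.value_fwd {a b : Tm} (h : Betav a b) (ha : IsValue a) : IsValue b := by
  cases ha with
  | var => cases h
  | lam => cases h; constructor

theorem NW.lam_fwd {a b : Tm} (h : Betav (lam a) b) : ∃ b', b = lam b' := by
  cases h; exact ⟨_, rfl⟩

theorem NW.betav {a b : Tm} (h : ReflTransGen NW a b) : ReflTransGen Betav a b :=
  h.lift id (fun _ _ t => t.1)

theorem value_rtg {a b : Tm} (h : ReflTransGen Betav a b) (ha : IsValue a) : IsValue b := by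
  induction h with
  | refl => exact ha
  | tail _ h ih => exact NW.value_fwd h ih

theorem lam_rtg {a b : Tm} (h : ReflTransGen Betav a b) (ha : ∃ a', a = lam a') :
    ∃ b', b = lam b' := by
  induction h with
  | refl => exact ha
  | tail _ h ih => obtain ⟨_, rfl⟩ := ih; exact NW.lam_fwd h

/-- Chains of non-weak steps in the function position. -/
theorem NW.appL {a b R : Tm} (h : ReflTransGen NW a b)
    (hR : ¬ ((∃ b', b = lam b') ∧ IsValue R)) : ReflTransGen NW (app a R) (app b R) := by
  induction h using ReflTransGen.head_induction_on with
  | refl => exact .refl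
  | @head a c h hcb ih =>
    by_cases hac : a = c
    · subst hac; exact ih
    refine .head ⟨.appL h.1, fun w => ?_⟩ ih
    generalize hx : app a R = x at w
    generalize hy : app c R = y at w
    cases w with
    | appL w => cases hx; cases hy; exact h.2 w
    | appR w => cases hx; cases hy; exact hac rfl
    | beta hV =>
      cases hx
      refine hR ⟨?_, hV⟩
      exact lam_rtg (NW.betav hcb) (NW.lam_fwd h.1)

theorem NW.appR {a b P : Tm} (h : ReflTransGen NW a b)
    (hR : ¬ ((∃ b', P = lam b') ∧ IsValue b)) : ReflTransGen NW (app P a) (app P b) := by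
  induction h using ReflTransGen.head_induction_on with
  | refl => exact .refl
  | @head a c h hcb ih =>
    by_cases hac : a = c
    · subst hac; exact ih
    refine .head ⟨.appR h.1, fun w => ?_⟩ ih
    generalize hx : app P a = x at w
    generalize hy : app P c = y at w
    cases w with
    | appR w => cases hx; cases hy; exact h.2 w
    | appL w => cases hx; cases hy; exact hac rfl
    | beta hV =>
      cases hx
      refine hR ⟨⟨_, rfl⟩, ?_⟩
      exact value_rtg (NW.betav hcb) (NW.value_fwd h.1 hV)

theorem Std.rtg {b n P Q} (h : Std b n P Q) : ReflTransGen Betav P Q :=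
  h.serial.lift id (fun _ _ t => t.betav)

theorem NW.args {Q V V' : Tm} (h : ReflTransGen Betav V V') (hV : IsValue V) :
    ReflTransGen NW (app (lam Q) V) (app (lam Q) V') := by
  induction h with
  | refl => exact .refl
  | tail h hs ih => exact ih.tail (NW.arg (value_rtg h hV) hs)

theorem weak_fact {b n U N} (h : Std b n U N) :
    ∃ U', ReflTransGen Weakv U U' ∧ ReflTransGen NW U' N := by
  induction h with
  | var i => exact ⟨_, .refl, .refl⟩
  | lam h ih =>
    exact ⟨_, .refl, h.rtg.lift Tm.lam (fun _ _ t => ⟨.lam t, fun w => by cases w⟩)⟩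
  | weak w h ih =>
    obtain ⟨U, h1, h2⟩ := ih
    exact ⟨U, .head w h1, h2⟩
  | @app n m P P' R R' h h' ih ih' =>
    by_cases hv : (∃ b', P' = lam b') ∧ IsValue R'
    · obtain ⟨⟨Q, rfl⟩, hR'⟩ := hv
      have hR := h'.value hR'
      cases h with
      | lam h =>
        obtain ⟨U, h1, h2⟩ := redex_fact _ _ _ _ R hR h
        refine ⟨U, h1, h2.trans ?_⟩
        exact NW.args h'.rtg hR
    · obtain ⟨U1, h1, h2⟩ := ih
      obtain ⟨U2, h3, h4⟩ := ih'
      have hv2 : ¬ ((∃ b', P' = lam b') ∧ IsValue U2) := by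
        rintro ⟨hl, hV⟩
        exact hv ⟨hl, value_rtg (NW.betav h4) hV⟩
      exact ⟨app U1 U2, (h1.lift (fun X => app X R) (fun _ _ w => .appL w)).trans
        (h3.lift (fun X => app U1 X) (fun _ _ w => .appR w)),
        (NW.appL h2 hv2).trans (NW.appR h4 hv)⟩

/-- Weak normal terms. -/
def Wn (a : Tm) : Prop := ∀ s, ¬ Weakv a s

theorem value_or_weak {a b : Tm} (h : Betav a b) (hb : IsValue b) :
    IsValue a ∨ ∃ d, Weakv a d := by
  cases h with
  | beta hV => exact .inr ⟨_, .beta hV⟩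
  | lam => exact .inl (.lam _)
  | appL => cases hb
  | appR => cases hb

theorem lam_or_weak {a b : Tm} (h : Betav a (lam b)) :
    (∃ a', a = lam a') ∨ ∃ d, Weakv a d := by
  generalize hc : lam b = c at h
  cases h with
  | beta hV => exact .inr ⟨_, .beta hV⟩
  | lam => exact .inl ⟨_, rfl⟩
  | appL => cases hc
  | appR => cases hc

theorem weak_back {a b : Tm} (h : Betav a b) : ∀ c, Weakv b c → ∃ d, Weakv a d := by
  induction h with
  | beta hV => intro c _; exact ⟨_, .beta hV⟩
  | lam => intro c h; cases h
  | appL h ih =>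
    intro c w
    cases w with
    | appL w => obtain ⟨d, hd⟩ := ih _ w; exact ⟨_, .appL hd⟩
    | appR w => exact ⟨_, .appR w⟩
    | beta hV =>
      rcases lam_or_weak h with ⟨a', rfl⟩ | ⟨d, hd⟩
      · exact ⟨_, .beta hV⟩
      · exact ⟨_, .appL hd⟩
  | appR h ih =>
    intro c w
    cases w with
    | appR w => obtain ⟨d, hd⟩ := ih _ w; exact ⟨_, .appR hd⟩
    | appL w => exact ⟨_, .appL w⟩
    | beta hV =>
      rcases value_or_weak h hV with hv | ⟨d, hd⟩
      · exact ⟨_, .beta hv⟩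
      · exact ⟨_, .appR hd⟩

theorem Wn.fwd {a b : Tm} (ha : Wn a) (h : Betav a b) : Wn b := fun c hc =>
  let ⟨d, hd⟩ := weak_back h c hc
  ha d hd

theorem Wn.fwds {a b : Tm} (ha : Wn a) (h : ReflTransGen Betav a b) : Wn b := by
  induction h with
  | refl => exact ha
  | tail _ h ih => exact ih.fwd h

theorem Std.weak_fwd {b n M N} (h : Std b n M N) (hb : b = true) :
    ∀ c, Weakv M c → ∃ d, Weakv N d := by
  induction h with
  | var => intro c w; cases w
  | lam => intro c w; cases w
  | weak => cases hb
  | app h hright ih ih' =>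
    intro c w
    cases w with
    | appL w => obtain ⟨d, hd⟩ := ih rfl _ w; exact ⟨_, .appL hd⟩
    | appR w => obtain ⟨d, hd⟩ := ih' rfl _ w; exact ⟨_, .appR hd⟩
    | beta hV =>
      cases h with
      | lam => exact ⟨_, .beta (value_rtg hright.rtg hV)⟩

/-- Steps outside of the strategy. -/
def NU (a b : Tm) : Prop := Betav a b ∧ ¬ UnbV a b

theorem NU.betav {a b : Tm} (h : ReflTransGen NU a b) : ReflTransGen Betav a b :=
  h.lift id (fun _ _ t => t.1)

theorem UnbV.rtg {a b : Tm} (h : ReflTransGen UnbV a b) : ReflTransGen Betav a b :=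
  h.lift id (fun _ _ t => t.betav)

theorem UnbV.of_not_wn {a b c : Tm} (h : UnbV a b) (hc : Weakv a c) : Weakv a b := by
  cases h with
  | weak h => exact h
  | lam h => exact (h _ hc).elim
  | appL h => exact (h _ hc).elim
  | appR h => exact (h _ hc).elim

theorem NW.to_NU {a b : Tm} (h : ReflTransGen NW a b) (hb : ∃ c, Weakv b c) :
    ReflTransGen NU a b ∧ ∃ c, Weakv a c := by
  induction h using ReflTransGen.head_induction_on with
  | refl => exact ⟨.refl, hb⟩
  | head h _ ih =>
    obtain ⟨ih, c, hc⟩ := ih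
    obtain ⟨d, hd⟩ := weak_back h.1 c hc
    exact ⟨.head ⟨h.1, fun u => h.2 (u.of_not_wn hd)⟩ ih, d, hd⟩

theorem UnbV.appLs {a b R : Tm} (h : ReflTransGen UnbV a b) (hw : Wn (app a R)) :
    ReflTransGen UnbV (app a R) (app b R) := by
  induction h with
  | refl => exact .refl
  | tail h hs ih => exact ih.tail (.appL (hw.fwds (UnbV.rtg ih)) hs)

theorem UnbV.appRs {a b R : Tm} (h : ReflTransGen UnbV a b) (hw : Wn (app R a)) :
    ReflTransGen UnbV (app R a) (app R b) := by
  induction h with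
  | refl => exact .refl
  | tail h hs ih => exact ih.tail (.appR (hw.fwds (UnbV.rtg ih)) hs)

theorem NU.appLs {a b R : Tm} (h : ReflTransGen NU a b) (hw : Wn (app a R)) :
    ReflTransGen NU (app a R) (app b R) := by
  induction h with
  | refl => exact .refl
  | @tail b c h hs ih =>
    by_cases hbc : b = c
    · subst hbc; exact ih
    refine ih.tail ⟨.appL hs.1, fun u => ?_⟩
    have hwb := hw.fwds (NU.betav ih)
    generalize hx : app b R = x at u
    generalize hy : app c R = y at u
    cases u with
    | weak w => subst hx; exact hwb _ w
    | lam => cases hx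
    | appL _ u => cases hx; cases hy; exact hs.2 u
    | appR _ u => cases hx; cases hy; exact hbc rfl

theorem NU.appRs {a b R : Tm} (h : ReflTransGen NU a b) (hw : Wn (app R a)) :
    ReflTransGen NU (app R a) (app R b) := by
  induction h with
  | refl => exact .refl
  | @tail b c h hs ih =>
    by_cases hbc : b = c
    · subst hbc; exact ih
    refine ih.tail ⟨.appR hs.1, fun u => ?_⟩
    have hwb := hw.fwds (NU.betav ih)
    generalize hx : app R b = x at u
    generalize hy : app R c = y at u
    cases u with
    | weak w => subst hx; exact hwb _ w
    | lam => cases hx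
    | appR _ u => cases hx; cases hy; exact hs.2 u
    | appL _ u => cases hx; cases hy; exact hbc rfl

theorem lam_wn (P : Tm) : Wn (lam P) := fun _ w => by cases w

theorem std_fact {b n M N} (h : Std b n M N) :
    ∃ U, ReflTransGen UnbV M U ∧ ReflTransGen NU U N := by
  induction h with
  | var i => exact ⟨_, .refl, .refl⟩
  | weak w _ ih =>
    obtain ⟨U, h1, h2⟩ := ih
    exact ⟨U, .head (.weak w) h1, h2⟩
  | lam _ ih =>
    obtain ⟨U, h1, h2⟩ := ih
    refine ⟨lam U, h1.lift Tm.lam (fun _ _ u => .lam (lam_wn _) u),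
      h2.lift Tm.lam (fun a b t => ⟨.lam t.1, fun u => ?_⟩)⟩
    cases u with
    | weak w => cases w
    | lam _ u => exact t.2 u
  | @app n m P P' R R' h h' ih ih' =>
    by_cases hw : ∃ c, Weakv (app P' R') c
    · obtain ⟨U, h1, h2⟩ := weak_fact (Std.app h h')
      exact ⟨U, h1.lift id (fun _ _ w => .weak w), (NW.to_NU h2 hw).1⟩
    · have hwn : Wn (app P R) := fun c hc => hw ((Std.app h h').weak_fwd rfl c hc)
      obtain ⟨U1, h1, h2⟩ := ih
      obtain ⟨U2, h3, h4⟩ := ih'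
      have e1 := UnbV.appLs h1 hwn
      have w1 := hwn.fwds (UnbV.rtg e1)
      have e2 := UnbV.appRs h3 w1
      have w2 := w1.fwds (UnbV.rtg e2)
      have e3 := NU.appLs h2 w2
      have w3 := w2.fwds (NU.betav e3)
      exact ⟨app U1 U2, e1.trans e2, e3.trans (NU.appRs h4 w3)⟩

/-- **Unbiased-strategy factorization for Call-by-Value**: if `M →βv* N` then there is a
term `U` with `M ⊳* U` and `U ⋫* N`, where `⋫` is a βv-step which is not a `⊳`-step. -/
theorem cbv_unbiased_factorization (M N : Tm) (h : Relation.ReflTransGen Betav M N) :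
    ∃ U : Tm, Relation.ReflTransGen UnbV M U ∧
      Relation.ReflTransGen (fun a b => Betav a b ∧ ¬ UnbV a b) U N := by
  obtain ⟨b, n, hs⟩ := St.of_betav h
  exact std_fact hs
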